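/- arXiv:1110.0174 — 4 statements merged into one kernel-verified Lean document; each statement's English description precedes it below -/
import Mathlib

section
/- Let 𝔾 = F(a,b) × F(c,d) be the direct product of two free groups of rank 2 (equivalently, the partially commutative group on generators a, b, c, d with relations [x,y] = 1 for x ∈ {a,b} and y ∈ {c,d}), and let H be the group with presentation ⟨a, b, c, d, t ∣ [a,c] = [a,d] = [b,c] = [b,d] = 1, [t, ab] = 1, [t, cd] = 1⟩ (the extension of the centraliser C_𝔾(ab·cd) = ⟨ab⟩ × ⟨cd⟩ of the element w = ab·cd). Let ι : 𝔾 → H be the natural homomorphism sending generators to generators. Then: (1) ι is injective; (2) the element v = [ι(a)^t, ι(c)] (the commutator of t⁻¹ι(a)t and ι(c)) is nontrivial in H; (3) every homomorphism φ : H → 𝔾 with φ ∘ ι = id_𝔾 satisfies φ(v) = 1. Consequently, H is not residually 𝔾 via homomorphisms that restrict to the identity on 𝔾 (H is not separated by 𝔾 as a 𝔾-group). -/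
namespace CentraliserExtension

/-- Formal commutator `x⁻¹y⁻¹xy` in a free group. -/
def fcomm {α : Type*} (x y : FreeGroup α) : FreeGroup α := x⁻¹ * y⁻¹ * x * y

/-- Commutator `g⁻¹h⁻¹gh` in a group. -/
def gcomm {M : Type*} [Group M] (g h : M) : M := g⁻¹ * h⁻¹ * g * h

/-- Relators for `𝔾 = F(a,b) × F(c,d)` on generators `a = 0, b = 1, c = 2, d = 3`:
`[x,y] = 1` for `x ∈ {a,b}` and `y ∈ {c,d}`. -/
def relsG : Set (FreeGroup (Fin 4)) :=
  { fcomm (FreeGroup.of 0) (FreeGroup.of 2), fcomm (FreeGroup.of 0) (FreeGroup.of 3),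
    fcomm (FreeGroup.of 1) (FreeGroup.of 2), fcomm (FreeGroup.of 1) (FreeGroup.of 3) }

/-- Relators for the extension of the centraliser of `w = ab·cd`, on generators
`a = 0, b = 1, c = 2, d = 3, t = 4`. -/
def relsH : Set (FreeGroup (Fin 5)) :=
  { fcomm (FreeGroup.of 0) (FreeGroup.of 2), fcomm (FreeGroup.of 0) (FreeGroup.of 3),
    fcomm (FreeGroup.of 1) (FreeGroup.of 2), fcomm (FreeGroup.of 1) (FreeGroup.of 3),
    fcomm (FreeGroup.of 4) (FreeGroup.of 0 * FreeGroup.of 1),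
    fcomm (FreeGroup.of 4) (FreeGroup.of 2 * FreeGroup.of 3) }

/-- `𝔾 = F(a,b) × F(c,d)` as a partially commutative (presented) group. -/
abbrev Gpc := PresentedGroup relsG

/-- `H = ⟨𝔾, t ∣ [t, C_𝔾(ab·cd)] = 1⟩`, the extension of the centraliser
`⟨ab⟩ × ⟨cd⟩` of `ab·cd`. -/
abbrev Hext := PresentedGroup relsH

/-- The element `v = [a^t, c]` of `H`. -/
def vElt : Hext :=
  gcomm ((PresentedGroup.of 4)⁻¹ * PresentedGroup.of 0 * PresentedGroup.of 4)
    (PresentedGroup.of 2)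

theorem gcomm_eq_one_iff {M : Type*} [Group M] (g h : M) : gcomm g h = 1 ↔ g * h = h * g := by
  unfold gcomm
  constructor
  · intro H
    have : h * g * (g⁻¹ * h⁻¹ * g * h) = h * g := by rw [H, mul_one]
    rw [← this]; group
  · intro H
    rw [mul_assoc, H]; group

theorem map_fcomm {α M : Type*} [Group M] (f : FreeGroup α →* M) (x y : FreeGroup α) :
    f (fcomm x y) = gcomm (f x) (f y) := by
  simp [fcomm, gcomm]

theorem commG (x y : Fin 4) (h : fcomm (FreeGroup.of x) (FreeGroup.of y) ∈ relsG) :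
    (PresentedGroup.of x : Gpc) * PresentedGroup.of y
      = PresentedGroup.of y * PresentedGroup.of x := by
  have h1 : PresentedGroup.mk relsG (fcomm (FreeGroup.of x) (FreeGroup.of y)) = 1 :=
    PresentedGroup.one_of_mem h
  rw [map_fcomm, gcomm_eq_one_iff] at h1
  exact h1

theorem commH (x y : Fin 5) (h : fcomm (FreeGroup.of x) (FreeGroup.of y) ∈ relsH) :
    (PresentedGroup.of x : Hext) * PresentedGroup.of y
      = PresentedGroup.of y * PresentedGroup.of x := by
  have h1 : PresentedGroup.mk relsH (fcomm (FreeGroup.of x) (FreeGroup.of y)) = 1 :=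
    PresentedGroup.one_of_mem h
  rw [map_fcomm, gcomm_eq_one_iff] at h1
  exact h1

/-- The subgroup `⟨a, b⟩` of `𝔾`. -/
def subAB : Subgroup Gpc :=
  Subgroup.closure {PresentedGroup.of 0, PresentedGroup.of 1}

theorem subAB_comm (g : Gpc) (hg : g ∈ subAB) (j : Fin 4) (hj : j = 2 ∨ j = 3) :
    g * PresentedGroup.of j = PresentedGroup.of j * g := by
  have : subAB ≤ Subgroup.centralizer {(PresentedGroup.of j : Gpc)} := by
    unfold subAB
    rw [Subgroup.closure_le]
    rintro x (rfl | rfl) <;> rcases hj with rfl | rfl <;>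
      simp only [SetLike.mem_coe, Subgroup.mem_centralizer_singleton_iff] <;>
      first
        | exact commG _ _ (by simp [relsG])
        | exact (commG _ _ (by simp [relsG])).symm
  have h2 := Subgroup.mem_centralizer_singleton_iff.1 (this hg)
  first
    | exact h2
    | exact h2.symm

theorem subAB_conj (g : Gpc) : ∀ x ∈ subAB, g⁻¹ * x * g ∈ subAB := by
  have hg : g ∈ Subgroup.closure (Set.range (PresentedGroup.of : Fin 4 → Gpc)) := by
    rw [PresentedGroup.closure_range_of]; trivial
  have ha : (PresentedGroup.of 0 : Gpc) ∈ subAB := Subgroup.subset_closure (by simp)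
  have hb : (PresentedGroup.of 1 : Gpc) ∈ subAB := Subgroup.subset_closure (by simp)
  have key : ∀ i : Fin 4, ∀ x ∈ subAB,
      (PresentedGroup.of i)⁻¹ * x * PresentedGroup.of i ∈ subAB ∧
      PresentedGroup.of i * x * (PresentedGroup.of i)⁻¹ ∈ subAB := by
    intro i x hx
    have hc : ∀ j : Fin 4, (j = 2 ∨ j = 3) →
        (PresentedGroup.of j)⁻¹ * x * PresentedGroup.of j ∈ subAB ∧
        PresentedGroup.of j * x * (PresentedGroup.of j)⁻¹ ∈ subAB := by
      intro j hj
      have e := subAB_comm x hx j hj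
      constructor
      · rw [mul_assoc, e, inv_mul_cancel_left]; exact hx
      · rw [← e, mul_inv_cancel_right]; exact hx
    have hd : ∀ y ∈ subAB, y⁻¹ * x * y ∈ subAB ∧ y * x * y⁻¹ ∈ subAB := fun y hy =>
      ⟨mul_mem (mul_mem (inv_mem hy) hx) hy, mul_mem (mul_mem hy hx) (inv_mem hy)⟩
    fin_cases i
    · exact hd _ ha
    · exact hd _ hb
    · exact hc 2 (Or.inl rfl)
    · exact hc 3 (Or.inr rfl)
  have main : (∀ x ∈ subAB, g⁻¹ * x * g ∈ subAB) ∧ (∀ x ∈ subAB, g * x * g⁻¹ ∈ subAB) := by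
    induction hg using Subgroup.closure_induction with
    | mem y hy =>
      obtain ⟨i, rfl⟩ := hy
      exact ⟨fun x hx => (key i x hx).1, fun x hx => (key i x hx).2⟩
    | one => simp
    | mul y z _ _ h1 h2 =>
      refine ⟨fun x hx => ?_, fun x hx => ?_⟩
      · have := h2.1 _ (h1.1 x hx)
        simpa [mul_assoc] using this
      · have := h1.2 _ (h2.2 x hx)
        simpa [mul_assoc] using this
    | inv y _ h => exact ⟨by simpa using h.2, by simpa using h.1⟩
  exact main.1

/-- The natural homomorphism `𝔾 → H`. -/
def iotaHom : Gpc →* Hext :=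
  PresentedGroup.toGroup (f := fun i : Fin 4 => (PresentedGroup.of (Fin.castSucc i) : Hext)) (by
    rintro r (rfl | rfl | rfl | rfl) <;> rw [map_fcomm, gcomm_eq_one_iff] <;>
      simp only [FreeGroup.lift_apply_of]
    · exact commH 0 2 (by simp [relsH])
    · exact commH 0 3 (by simp [relsH])
    · exact commH 1 2 (by simp [relsH])
    · exact commH 1 3 (by simp [relsH]))

/-- The retraction `H → 𝔾` killing `t`. -/
def retr : Hext →* Gpc :=
  PresentedGroup.toGroup (f := (![PresentedGroup.of 0, PresentedGroup.of 1, PresentedGroup.of 2,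
      PresentedGroup.of 3, 1] : Fin 5 → Gpc)) (by
    rintro r (rfl | rfl | rfl | rfl | rfl | rfl) <;> rw [map_fcomm, gcomm_eq_one_iff] <;>
      simp only [FreeGroup.lift_apply_of, map_mul]
    · exact commG 0 2 (by simp [relsG])
    · exact commG 0 3 (by simp [relsG])
    · exact commG 1 2 (by simp [relsG])
    · exact commG 1 3 (by simp [relsG])
    · exact (one_mul _).trans (mul_one _).symm
    · exact (one_mul _).trans (mul_one _).symm)

/-- A homomorphism to `S₃` detecting `v`. -/
def toPerm : Hext →* Equiv.Perm (Fin 3) :=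
  PresentedGroup.toGroup (f := (![Equiv.swap 0 1, Equiv.swap 0 1, Equiv.swap 0 1,
      Equiv.swap 0 1, Equiv.swap 1 2] : Fin 5 → Equiv.Perm (Fin 3))) (by
    rintro r (rfl | rfl | rfl | rfl | rfl | rfl) <;> rw [map_fcomm, gcomm_eq_one_iff] <;>
      simp only [FreeGroup.lift_apply_of, map_mul] <;> decide)

theorem vElt_ne_one : vElt ≠ 1 := by
  intro h
  have h1 := congrArg toPerm h
  rw [vElt, map_one] at h1
  simp only [gcomm, map_mul, map_inv, toPerm, PresentedGroup.toGroup.of] at h1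
  revert h1
  decide

theorem centraliser_extension_not_separated :
    ∃ ι : Gpc →* Hext,
      (∀ i : Fin 4, ι (PresentedGroup.of i) = PresentedGroup.of (Fin.castSucc i)) ∧
      Function.Injective ι ∧
      vElt ≠ 1 ∧
      (∀ φ : Hext →* Gpc, φ.comp ι = MonoidHom.id Gpc → φ vElt = 1) ∧
      ¬ (∀ h : Hext, h ≠ 1 →
          ∃ φ : Hext →* Gpc, φ.comp ι = MonoidHom.id Gpc ∧ φ h ≠ 1) := by
  have hι : ∀ i : Fin 4, iotaHom (PresentedGroup.of i) = PresentedGroup.of (Fin.castSucc i) :=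
    fun i => PresentedGroup.toGroup.of _
  have h3 : ∀ φ : Hext →* Gpc, φ.comp iotaHom = MonoidHom.id Gpc → φ vElt = 1 := by
    intro φ hφ
    have hgen : ∀ i : Fin 4, φ (PresentedGroup.of (Fin.castSucc i)) = PresentedGroup.of i := by
      intro i
      rw [← hι]
      exact DFunLike.congr_fun hφ (PresentedGroup.of i)
    have h0 : φ (PresentedGroup.of 0) = PresentedGroup.of 0 := hgen 0
    have h2 : φ (PresentedGroup.of 2) = PresentedGroup.of 2 := hgen 2
    have e : φ vElt = gcomm ((φ (PresentedGroup.of 4))⁻¹ * PresentedGroup.of 0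
        * φ (PresentedGroup.of 4)) (PresentedGroup.of 2) := by
      simp only [vElt, gcomm, map_mul, map_inv, h0, h2]
    rw [e, gcomm_eq_one_iff]
    exact subAB_comm _ (subAB_conj _ _ (Subgroup.subset_closure (by simp))) 2 (Or.inl rfl)
  refine ⟨iotaHom, hι, ?_, vElt_ne_one, h3, ?_⟩
  · have hr : retr.comp iotaHom = MonoidHom.id Gpc := by
      apply PresentedGroup.ext
      intro i
      rw [MonoidHom.comp_apply, hι, retr, PresentedGroup.toGroup.of]
      fin_cases i <;> rfl
    exact Function.LeftInverse.injective (g := retr) (DFunLike.congr_fun hr)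
  · intro H
    obtain ⟨φ, h1, h2⟩ := H vElt vElt_ne_one
    exact h2 (h3 φ h1)

end CentraliserExtension
end

section
/- Let F(A) = F(a₁, a₂, …) be the free group on a countably infinite alphabet, F(B) = F(a₁, …, a_r) the subgroup generated by the first r generators, and F(b,c) the free group of rank 2. Let L ∈ ℕ and let w₁, …, w_r ∈ F(b,c) be reduced words of length r such that w_i ≠ w_j^{±1} for i ≠ j, each w_i involves the letter c (the letter c or c⁻¹ occurs in w_i), and no w_i begins or ends with b⁻¹. Define the homomorphism ψ : F(A) → F(b,c) on generators by ψ(a_i) = w_i · b^{L+i} · c · b^{L+i} · w_i for 1 ≤ i ≤ r, and ψ(a_j) = b^{L+r+j} · c · b^{L+r+j} for j > r. Then ψ is injective, and its restriction to F(B) is a quasi-isometric embedding with multiplicative constant 4r + 2L + 1: for every v ∈ F(B), 2L · ‖v‖ ≤ ‖ψ(v)‖ ≤ (4r + 2L + 1) · ‖v‖. -/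
/-- The homomorphism `ψ : F(a₁, a₂, …) → F(b, c)` (with `b = of false`,
`c = of true`, and the generators `a₁, a₂, …` indexed by `ℕ`, generator
`aᵢ` corresponding to index `i - 1`), given on generators by
`ψ(aᵢ) = wᵢ · b^(L+i) · c · b^(L+i) · wᵢ` for `1 ≤ i ≤ r` and
`ψ(aⱼ) = b^(L+r+j) · c · b^(L+r+j)` for `j > r`. -/
def psiMap (r L : ℕ) (w : Fin r → FreeGroup Bool) : FreeGroup ℕ →* FreeGroup Bool :=
  FreeGroup.lift fun i =>
    if h : i < r then
      w ⟨i, h⟩ * (FreeGroup.of false) ^ (L + i + 1) * FreeGroup.of true *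
        (FreeGroup.of false) ^ (L + i + 1) * w ⟨i, h⟩
    else
      (FreeGroup.of false) ^ (L + r + i + 1) * FreeGroup.of true *
        (FreeGroup.of false) ^ (L + r + i + 1)

namespace PsiAux

open FreeGroup

/-- `g` or its inverse, according to the sign. -/
def sgn {G : Type*} [Group G] (g : G) (e : Bool) : G := cond e g g⁻¹

theorem sgn_mul_comm {G : Type*} [Group G] (g h k : G) (e : Bool) :
    sgn (g * h * k * h * g) e = (sgn g e * sgn h e) * sgn k e * (sgn h e * sgn g e) := by
  cases e <;> simp [sgn, mul_assoc]

theorem invRev_snoc {α : Type*} (t : List (α × Bool)) (x : α × Bool) :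
    invRev (t ++ [x]) = (x.1, !x.2) :: invRev t := by
  simp [invRev]

theorem head?_invRev {α : Type*} (t : List (α × Bool)) :
    (invRev t).head? = t.getLast?.map fun x => (x.1, !x.2) := by
  simp [invRev]

theorem getLast?_invRev {α : Type*} (t : List (α × Bool)) :
    (invRev t).getLast? = t.head?.map fun x => (x.1, !x.2) := by
  simp [invRev]

/-- Maximal cancellation between two reduced words. -/
theorem decomp {α : Type*} (u : List (α × Bool)) : ∀ v : List (α × Bool),
    IsReduced u → IsReduced v →
    ∃ u1 t v1, u = u1 ++ t ∧ v = invRev t ++ v1 ∧ IsReduced (u1 ++ v1) := by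
  induction u using List.reverseRecOn with
  | nil => intro v _ hv; exact ⟨[], [], v, by simp, by simp, by simpa using hv⟩
  | append_singleton u' x ih =>
    intro v hu hv
    cases v with
    | nil => exact ⟨u' ++ [x], [], [], by simp, by simp, by simpa using hu⟩
    | cons y v' =>
      by_cases hxy : x.1 = y.1 → x.2 = y.2
      · refine ⟨u' ++ [x], [], y :: v', by simp, by simp, ?_⟩
        refine List.IsChain.append hu hv ?_
        intro a ha b hb
        simp only [List.getLast?_append, List.getLast?_singleton, Option.some_or, Option.mem_def,
          Option.some.injEq, List.head?_cons] at ha hb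
        subst ha hb
        exact hxy
      · have h1 : IsReduced u' := List.IsChain.left_of_append hu
        have h2 : IsReduced v' := List.IsChain.right_of_append (l₁ := [y]) hv
        obtain ⟨u1, t, v1, e1, e2, e3⟩ := ih v' h1 h2
        refine ⟨u1, t ++ [x], v1, by simp [e1], ?_, e3⟩
        rw [invRev_snoc, e2]
        obtain ⟨x1, x2⟩ := x
        obtain ⟨y1, y2⟩ := y
        cases x2 <;> cases y2 <;> simp_all

theorem toWord_mk_of {l : List (Bool × Bool)} (h : IsReduced l) : (mk l).toWord = l := by
  rw [toWord_mk, h.reduce_eq]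

/-- If cancellation consumes neither factor, the first and last letters survive. -/
theorem ends_mul (g h : FreeGroup Bool)
    (H1 : ∀ v, h.toWord ≠ invRev g.toWord ++ v)
    (H2 : ∀ u, g.toWord ≠ u ++ invRev h.toWord) :
    (g * h).toWord ≠ [] ∧ (g * h).toWord.head? = g.toWord.head? ∧
      (g * h).toWord.getLast? = h.toWord.getLast? := by
  obtain ⟨u1, t, v1, e1, e2, e3⟩ := decomp g.toWord h.toWord isReduced_toWord isReduced_toWord
  have hu : u1 ≠ [] := by
    rintro rfl
    exact H1 v1 (by rw [e1, e2]; simp)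
  have hv : v1 ≠ [] := by
    rintro rfl
    exact H2 u1 (by rw [e2, e1]; simp [invRev_invRev])
  have key : g * h = mk (u1 ++ v1) := by
    rw [← mk_toWord (x := g), ← mk_toWord (x := h), e1, e2, ← mul_mk, ← mul_mk, ← mul_mk, ← inv_mk]
    group
  rw [key, toWord_mk_of e3, e1, e2]
  refine ⟨by simp [hu], ?_, ?_⟩
  · rw [List.head?_append_of_ne_nil _ hu, List.head?_append_of_ne_nil _ hu]
  · rw [List.getLast?_append_of_ne_nil _ hv, List.getLast?_append_of_ne_nil _ hv]

theorem toWord_mul_of (g h : FreeGroup Bool)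
    (H : ∀ x ∈ g.toWord.getLast?, ∀ y ∈ h.toWord.head?, x.1 = y.1 → x.2 = y.2) :
    (g * h).toWord = g.toWord ++ h.toWord := by
  rw [toWord_mul]
  exact IsReduced.reduce_eq (List.IsChain.append isReduced_toWord isReduced_toWord H)

theorem toWord_sgn_pow (a : Bool) (m : ℕ) (e : Bool) :
    (sgn (of a ^ m) e).toWord = List.replicate m (a, e) := by
  cases e <;> simp [sgn, invRev]

theorem toWord_sgn_of (a : Bool) (e : Bool) :
    (sgn (of a) e).toWord = [(a, e)] := by
  simpa using toWord_sgn_pow a 1 e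

theorem sandwich (z : FreeGroup Bool) (e e' : Bool) (m m' : ℕ)
    (hz : z.toWord ≠ [])
    (h1 : z.toWord.head? ≠ some (false, !e)) (h2 : z.toWord.getLast? ≠ some (false, !e')) :
    (sgn (of false ^ m) e * z * sgn (of false ^ m') e').toWord =
      List.replicate m (false, e) ++ z.toWord ++ List.replicate m' (false, e') := by
  have A : (sgn (of false ^ m) e * z).toWord = List.replicate m (false, e) ++ z.toWord := by
    rw [toWord_mul_of, toWord_sgn_pow]
    rintro ⟨x1, x2⟩ hx ⟨y1, y2⟩ hy h
    rw [toWord_sgn_pow] at hx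
    have := List.mem_of_getLast? hx
    rw [List.mem_replicate] at this
    obtain ⟨_, hh⟩ := this
    rw [Option.mem_def] at hy
    rw [hy] at h1
    cases e <;> cases y2 <;> simp_all
  rw [toWord_mul_of, toWord_sgn_pow, A]
  rw [A, toWord_sgn_pow, List.getLast?_append_of_ne_nil _ hz]
  rintro ⟨x1, x2⟩ hx ⟨y1, y2⟩ hy h
  have := List.mem_of_mem_head? hy
  rw [List.mem_replicate] at this
  obtain ⟨_, hh⟩ := this
  rw [Option.mem_def] at hx
  rw [hx] at h2
  cases e' <;> cases x2 <;> simp_all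

/-- First and last letters are powers of `b`. -/
def BEnds (z : FreeGroup Bool) : Prop :=
  (∃ d, z.toWord.head? = some (false, d)) ∧ ∃ d, z.toWord.getLast? = some (false, d)

theorem sandwich_bEnds (z : FreeGroup Bool) (e e' : Bool) (m m' : ℕ)
    (hz : z.toWord ≠ []) (hm : 0 < m) (hm' : 0 < m')
    (h1 : z.toWord.head? ≠ some (false, !e)) (h2 : z.toWord.getLast? ≠ some (false, !e')) :
    BEnds (sgn (of false ^ m) e * z * sgn (of false ^ m') e') ∧
      m + m' ≤ (sgn (of false ^ m) e * z * sgn (of false ^ m') e').norm := by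
  unfold BEnds FreeGroup.norm
  rw [sandwich z e e' m m' hz h1 h2]
  refine ⟨⟨⟨e, ?_⟩, ⟨e', ?_⟩⟩, ?_⟩
  · rw [List.append_assoc, List.head?_append_of_ne_nil _ (by simp; omega)]
    simp [List.head?_replicate]
    try omega
  · rw [List.getLast?_append_of_ne_nil _ (by simp; omega)]
    simp [List.getLast?_replicate]
    try omega
  · simp

/-- General chain lemma. -/
theorem chain_lemma (P Q : ℕ × Bool → FreeGroup Bool) (K : ℕ)
    (S : ℕ × Bool → Prop)
    (hQ : ∀ x, ∃ d, (Q x).toWord.head? = some (false, d))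
    (hQn : ∀ x, S x → K ≤ (Q x).norm)
    (hZ : ∀ x y : ℕ × Bool, (x.1 = y.1 → x.2 = y.2) → BEnds (Q x * P y))
    (hZn : ∀ x y : ℕ × Bool, (x.1 = y.1 → x.2 = y.2) → S x → S y → 2 * K ≤ (Q x * P y).norm)
    (l : List (ℕ × Bool)) : ∀ x, IsReduced (x :: l) →
      ∃ R : FreeGroup Bool,
        ((x :: l).map fun x => P x * sgn (of true) x.2 * Q x).prod = P x * R ∧
        R.toWord.head? = some (true, x.2) ∧
        ((∀ y ∈ x :: l, S y) → K + 2 * K * l.length ≤ R.norm) := by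
  induction l with
  | nil =>
    intro x _
    refine ⟨sgn (of true) x.2 * Q x, by simp [mul_assoc], ?_⟩
    have h : (sgn (of true) x.2 * Q x).toWord = (true, x.2) :: (Q x).toWord := by
      rw [toWord_mul_of, toWord_sgn_of]
      · rfl
      · intro a ha b hb
        rw [toWord_sgn_of] at ha
        obtain ⟨d, hd⟩ := hQ x
        rw [hd] at hb
        simp only [List.getLast?_singleton, Option.mem_def, Option.some.injEq] at ha hb
        subst ha hb
        simp
    refine ⟨by simp [h], fun hS => ?_⟩
    have := hQn x (hS x (by simp))
    unfold FreeGroup.norm at *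
    simp [h]; omega
  | cons y l ih =>
    intro x hx
    obtain ⟨hxy, hyl⟩ := List.isChain_cons_cons.1 hx
    obtain ⟨R, e1, e2, e3⟩ := ih y hyl
    obtain ⟨⟨d1, hd1⟩, ⟨d2, hd2⟩⟩ := hZ x y hxy
    have A : (sgn (of true) x.2 * (Q x * P y)).toWord = (true, x.2) :: (Q x * P y).toWord := by
      rw [toWord_mul_of, toWord_sgn_of]
      · rfl
      · intro a ha b hb
        rw [toWord_sgn_of] at ha
        rw [hd1] at hb
        simp only [List.getLast?_singleton, Option.mem_def, Option.some.injEq] at ha hb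
        subst ha hb
        simp
    have B : (sgn (of true) x.2 * (Q x * P y) * R).toWord =
        (true, x.2) :: (Q x * P y).toWord ++ R.toWord := by
      rw [toWord_mul_of, A]
      intro a ha b hb
      rw [A, List.getLast?_cons, hd2] at ha
      rw [e2] at hb
      simp only [Option.getD_some, Option.mem_def, Option.some.injEq] at ha hb
      subst ha hb
      simp
    refine ⟨sgn (of true) x.2 * (Q x * P y) * R, ?_, by simp [B], fun hS => ?_⟩
    · rw [List.map_cons, List.prod_cons, e1]; group
    · have h1 := e3 (fun z hz => hS z (by simp at hz ⊢; tauto))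
      have h2 := hZn x y hxy (hS x (by simp)) (hS y (by simp))
      unfold FreeGroup.norm at *
      rw [B]
      simp only [List.length_append, List.length_cons]
      nlinarith

theorem chain_final (P Q : ℕ × Bool → FreeGroup Bool) (K : ℕ)
    (S : ℕ × Bool → Prop)
    (hP : ∀ x, ∃ d, (P x).toWord.getLast? = some (false, d))
    (hQ : ∀ x, ∃ d, (Q x).toWord.head? = some (false, d))
    (hPn : ∀ x, S x → K ≤ (P x).norm)
    (hQn : ∀ x, S x → K ≤ (Q x).norm)
    (hZ : ∀ x y : ℕ × Bool, (x.1 = y.1 → x.2 = y.2) → BEnds (Q x * P y))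
    (hZn : ∀ x y : ℕ × Bool, (x.1 = y.1 → x.2 = y.2) → S x → S y → 2 * K ≤ (Q x * P y).norm)
    (l : List (ℕ × Bool)) (hl : IsReduced l) :
      (l ≠ [] → (l.map fun x => P x * sgn (of true) x.2 * Q x).prod ≠ 1) ∧
      ((∀ y ∈ l, S y) →
        2 * K * l.length ≤ (l.map fun x => P x * sgn (of true) x.2 * Q x).prod.norm) := by
  cases l with
  | nil => simp
  | cons x l =>
    obtain ⟨R, e1, e2, e3⟩ := chain_lemma P Q K S hQ hQn hZ hZn l x hl
    obtain ⟨d, hd⟩ := hP x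
    have B : (P x * R).toWord = (P x).toWord ++ R.toWord := by
      rw [toWord_mul_of]
      intro a ha b hb
      rw [hd] at ha
      rw [e2] at hb
      simp only [Option.mem_def, Option.some.injEq] at ha hb
      subst ha hb
      simp
    rw [e1]
    refine ⟨fun _ h => ?_, fun hS => ?_⟩
    · rw [h, toWord_one] at B
      have := (List.append_eq_nil_iff.1 B.symm).2
      rw [this] at e2
      simp at e2
    · have h1 := e3 hS
      have h2 := hPn x (hS x (by simp))
      unfold FreeGroup.norm at *
      rw [B]
      simp only [List.length_append, List.length_cons]
      nlinarith

theorem mul_pow_word (z : FreeGroup Bool) (e : Bool) (m : ℕ)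
    (h2 : z.toWord.getLast? ≠ some (false, !e)) :
    (z * sgn (of false ^ m) e).toWord = z.toWord ++ List.replicate m (false, e) := by
  rw [toWord_mul_of, toWord_sgn_pow]
  rw [toWord_sgn_pow]
  rintro ⟨x1, x2⟩ hx ⟨y1, y2⟩ hy h
  have := List.mem_of_mem_head? hy
  rw [List.mem_replicate] at this
  obtain ⟨_, hh⟩ := this
  rw [Option.mem_def] at hx
  rw [hx] at h2
  cases e <;> cases x2 <;> simp_all

theorem pow_mul_word (z : FreeGroup Bool) (e : Bool) (m : ℕ)
    (h1 : z.toWord.head? ≠ some (false, !e)) :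
    (sgn (of false ^ m) e * z).toWord = List.replicate m (false, e) ++ z.toWord := by
  rw [toWord_mul_of, toWord_sgn_pow]
  rintro ⟨x1, x2⟩ hx ⟨y1, y2⟩ hy h
  rw [toWord_sgn_pow] at hx
  have := List.mem_of_getLast? hx
  rw [List.mem_replicate] at this
  obtain ⟨_, hh⟩ := this
  rw [Option.mem_def] at hy
  rw [hy] at h1
  cases e <;> cases y2 <;> simp_all

theorem sgn_head (g : FreeGroup Bool) (e : Bool)
    (h1 : g.toWord.head? ≠ some (false, false)) (h2 : g.toWord.getLast? ≠ some (false, false)) :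
    (sgn g e).toWord.head? ≠ some (false, !e) := by
  cases e
  · simp only [sgn, cond_false, toWord_inv, head?_invRev]
    cases h : g.toWord.getLast? with
    | none => simp
    | some x => obtain ⟨x1, x2⟩ := x; rw [h] at h2; cases x1 <;> cases x2 <;> simp_all
  · simpa [sgn] using h1

theorem sgn_last (g : FreeGroup Bool) (e : Bool)
    (h1 : g.toWord.head? ≠ some (false, false)) (h2 : g.toWord.getLast? ≠ some (false, false)) :
    (sgn g e).toWord.getLast? ≠ some (false, !e) := by
  cases e
  · simp only [sgn, cond_false, toWord_inv, getLast?_invRev]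
    cases h : g.toWord.head? with
    | none => simp
    | some x => obtain ⟨x1, x2⟩ := x; rw [h] at h1; cases x1 <;> cases x2 <;> simp_all
  · simpa [sgn] using h2

theorem exists_c_invRev (l : List (Bool × Bool)) (h : ∃ p ∈ l, p.1 = true) :
    ∃ p ∈ invRev l, p.1 = true := by
  obtain ⟨p, hp, h⟩ := h
  exact ⟨(p.1, !p.2), by simp only [invRev, List.mem_reverse, List.mem_map]; exact ⟨p, hp, rfl⟩, h⟩

theorem exists_c_sgn (g : FreeGroup Bool) (e : Bool) (h : ∃ p ∈ g.toWord, p.1 = true) :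
    ∃ p ∈ (sgn g e).toWord, p.1 = true := by
  cases e
  · simpa only [sgn, cond_false, toWord_inv] using exists_c_invRev _ h
  · simpa [sgn] using h

theorem length_sgn {α : Type*} [DecidableEq α] (g : FreeGroup α) (e : Bool) :
    (sgn g e).toWord.length = g.norm := by
  cases e <;> simp [sgn, FreeGroup.norm]

theorem bEnds_sgn (k : ℕ) (hk : 0 < k) (e : Bool) : BEnds (sgn (of false ^ k) e) := by
  unfold BEnds
  rw [toWord_sgn_pow]
  refine ⟨⟨e, ?_⟩, ⟨e, ?_⟩⟩
  · simp [List.head?_replicate, hk.ne']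
  · simp [List.getLast?_replicate, hk.ne']

theorem bEnds_large (n n' : ℕ) (e e' : Bool) (hn : 0 < n) (h : n = n' → e = e') :
    BEnds (sgn (of false ^ n) e * sgn (of false ^ n') e') := by
  have same : ∀ d, BEnds (sgn (of false ^ n) d * sgn (of false ^ n') d) := by
    intro d
    have : sgn (of false ^ n) d * sgn (of false ^ n') d = sgn (of false ^ (n + n')) d := by
      cases d
      · simp only [sgn, cond_false]
        rw [← mul_inv_rev, ← pow_add, add_comm]
      · simp [sgn, pow_add]
    rw [this]
    exact bEnds_sgn _ (by omega) d
  have diff : ∀ d, n ≠ n' → BEnds (sgn (of false ^ n) d * sgn (of false ^ n') (!d)) := by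
    intro d hnn
    rcases lt_or_gt_of_ne hnn with hlt | hlt
    · obtain ⟨k, rfl⟩ := Nat.exists_eq_add_of_lt hlt
      have : sgn (of false ^ n) d * sgn (of false ^ (n + k + 1)) (!d) =
          sgn (of false ^ (k + 1)) (!d) := by
        rw [add_assoc]
        cases d
        · simp only [sgn, Bool.not_false, cond_true, cond_false]
          rw [pow_add]; group
        · simp only [sgn, Bool.not_true, cond_true, cond_false]
          rw [add_comm, pow_add (of false) (k + 1) n]; group
      rw [this]
      exact bEnds_sgn _ (by omega) _
    · obtain ⟨k, rfl⟩ := Nat.exists_eq_add_of_lt hlt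
      have : sgn (of false ^ (n' + k + 1)) d * sgn (of false ^ n') (!d) =
          sgn (of false ^ (k + 1)) d := by
        rw [add_assoc]
        cases d
        · simp only [sgn, Bool.not_false, cond_true, cond_false]
          rw [pow_add]; group
        · simp only [sgn, Bool.not_true, cond_true, cond_false]
          rw [add_comm, pow_add (of false) (k + 1) n']; group
      rw [this]
      exact bEnds_sgn _ (by omega) _
  by_cases hee : e = e'
  · subst hee; exact same e
  · have : e' = !e := by cases e <;> cases e' <;> simp_all
    subst this
    exact diff e (fun hh => hee (h hh))

theorem inv_sgn {G : Type*} [Group G] (g : G) (e : Bool) : (sgn g e)⁻¹ = sgn g (!e) := by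
  cases e <;> simp [sgn]

theorem ne_inv_self (g : FreeGroup Bool) (hg : ∃ p ∈ g.toWord, p.1 = true) : g ≠ g⁻¹ := by
  intro h
  have h2 : g ^ 2 = 1 := by
    rw [pow_two]; nth_rewrite 2 [h]; simp
  have : g = 1 := by simpa using h2
  subst this
  simp at hg

/-- Full cancellation condition for words of equal length. -/
theorem ends_mul_eqlen (g h : FreeGroup Bool) (hl : g.toWord.length = h.toWord.length)
    (hgh : h ≠ g⁻¹) :
    (g * h).toWord ≠ [] ∧ (g * h).toWord.head? = g.toWord.head? ∧
      (g * h).toWord.getLast? = h.toWord.getLast? := by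
  apply ends_mul
  · intro v hv
    have hlen := congrArg List.length hv
    rw [List.length_append, invRev_length] at hlen
    have : v = [] := List.length_eq_zero_iff.1 (by omega)
    subst this
    apply hgh
    apply toWord_injective
    rw [hv, toWord_inv, List.append_nil]
  · intro u hu
    have hlen := congrArg List.length hu
    rw [List.length_append, invRev_length] at hlen
    have : u = [] := List.length_eq_zero_iff.1 (by omega)
    subst this
    apply hgh
    rw [eq_inv_iff_mul_eq_one, ← inv_eq_iff_mul_eq_one]
    apply toWord_injective
    rw [hu, toWord_inv, List.nil_append]

theorem ends_mul_pow (g : FreeGroup Bool) (k : ℕ) (e : Bool) (hk : g.toWord.length < k)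
    (hg : ∃ p ∈ g.toWord, p.1 = true) :
    (g * sgn (of false ^ k) e).toWord ≠ [] ∧
    (g * sgn (of false ^ k) e).toWord.head? = g.toWord.head? ∧
      (g * sgn (of false ^ k) e).toWord.getLast? = (sgn (of false ^ k) e).toWord.getLast? := by
  apply ends_mul
  · intro v hv
    obtain ⟨p, hp, hpt⟩ := exists_c_invRev _ hg
    have : p ∈ (sgn (of false ^ k) e).toWord := by rw [hv]; simp [hp]
    rw [toWord_sgn_pow, List.mem_replicate] at this
    rw [this.2] at hpt
    simp at hpt
  · intro u hu
    have hlen := congrArg List.length hu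
    rw [List.length_append, invRev_length, toWord_sgn_pow, List.length_replicate] at hlen
    omega

theorem ends_pow_mul (g : FreeGroup Bool) (k : ℕ) (e : Bool) (hk : g.toWord.length < k)
    (hg : ∃ p ∈ g.toWord, p.1 = true) :
    (sgn (of false ^ k) e * g).toWord ≠ [] ∧
    (sgn (of false ^ k) e * g).toWord.head? = (sgn (of false ^ k) e).toWord.head? ∧
      (sgn (of false ^ k) e * g).toWord.getLast? = g.toWord.getLast? := by
  apply ends_mul
  · intro u hu
    have hlen := congrArg List.length hu
    rw [List.length_append, invRev_length, toWord_sgn_pow, List.length_replicate] at hlen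
    omega
  · intro v hv
    obtain ⟨p, hp, hpt⟩ := exists_c_invRev _ hg
    have : p ∈ (sgn (of false ^ k) e).toWord := by rw [hv]; simp [hp]
    rw [toWord_sgn_pow, List.mem_replicate] at this
    rw [this.2] at hpt
    simp at hpt

/-- The outer part of the image of a generator. -/
def outer (r L : ℕ) (w : Fin r → FreeGroup Bool) (i : ℕ) : FreeGroup Bool :=
  if h : i < r then w ⟨i, h⟩ else of false ^ (L + r + i)

/-- The exponent of `b` split off next to the central `c`. -/
def expo (r L : ℕ) (i : ℕ) : ℕ := if i < r then L + i + 1 else 1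

/-- Left part. -/
def PP (r L : ℕ) (w : Fin r → FreeGroup Bool) (x : ℕ × Bool) : FreeGroup Bool :=
  sgn (outer r L w x.1) x.2 * sgn (of false ^ expo r L x.1) x.2

/-- Right part. -/
def QQ (r L : ℕ) (w : Fin r → FreeGroup Bool) (x : ℕ × Bool) : FreeGroup Bool :=
  sgn (of false ^ expo r L x.1) x.2 * sgn (outer r L w x.1) x.2

theorem psiMap_eq (r L : ℕ) (w : Fin r → FreeGroup Bool) (v : FreeGroup ℕ) :
    psiMap r L w v =
      (v.toWord.map fun x => PP r L w x * sgn (of true) x.2 * QQ r L w x).prod := by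
  conv_lhs => rw [← mk_toWord (x := v)]
  unfold psiMap
  rw [lift_mk]
  congr 1
  apply List.map_congr_left
  rintro ⟨i, e⟩ _
  unfold PP QQ
  rw [← sgn_mul_comm]
  unfold outer expo
  by_cases h : i < r
  · simp only [h, dite_true, if_true]; rfl
  · simp only [h, dite_false, if_false]
    unfold sgn
    have : (of false : FreeGroup Bool) ^ (L + r + i + 1) * of true * of false ^ (L + r + i + 1)
      = of false ^ (L + r + i) * of false ^ 1 * of true * of false ^ 1 * of false ^ (L + r + i) := by
      rw [← pow_add, mul_assoc _ (of false ^ 1), ← pow_add, add_comm 1]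
    rw [this]

theorem expo_pos (r L i : ℕ) : 0 < expo r L i := by
  unfold expo; split <;> omega

theorem outer_ends
    (r L : ℕ) (w : Fin r → FreeGroup Bool)
    (hhead : ∀ i, (w i).toWord.head? ≠ some (false, false))
    (hlast : ∀ i, (w i).toWord.getLast? ≠ some (false, false))
    (i : ℕ) : (outer r L w i).toWord.head? ≠ some (false, false) ∧
    (outer r L w i).toWord.getLast? ≠ some (false, false) := by
  unfold outer
  split
  · exact ⟨hhead _, hlast _⟩
  · rw [toWord_of_pow]
    simp [List.head?_replicate, List.getLast?_replicate]

theorem PP_word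
    (r L : ℕ) (w : Fin r → FreeGroup Bool)
    (hhead : ∀ i, (w i).toWord.head? ≠ some (false, false))
    (hlast : ∀ i, (w i).toWord.getLast? ≠ some (false, false))
    (x : ℕ × Bool) : (PP r L w x).toWord =
    (sgn (outer r L w x.1) x.2).toWord ++ List.replicate (expo r L x.1) (false, x.2) := by
  obtain ⟨h1, h2⟩ := outer_ends r L w hhead hlast x.1
  exact mul_pow_word _ _ _ (sgn_last _ _ h1 h2)

theorem QQ_word
    (r L : ℕ) (w : Fin r → FreeGroup Bool)
    (hhead : ∀ i, (w i).toWord.head? ≠ some (false, false))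
    (hlast : ∀ i, (w i).toWord.getLast? ≠ some (false, false))
    (x : ℕ × Bool) : (QQ r L w x).toWord =
    List.replicate (expo r L x.1) (false, x.2) ++ (sgn (outer r L w x.1) x.2).toWord := by
  obtain ⟨h1, h2⟩ := outer_ends r L w hhead hlast x.1
  exact pow_mul_word _ _ _ (sgn_head _ _ h1 h2)

theorem outer_mul
    (r L : ℕ) (w : Fin r → FreeGroup Bool)
    (hlen : ∀ i, (w i).norm = r)
    (hne : ∀ i j : Fin r, i ≠ j → w i ≠ w j ∧ w i ≠ (w j)⁻¹)
    (hc : ∀ i, ∃ p ∈ (w i).toWord, p.1 = true)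
    (x y : ℕ × Bool) (hxy : x.1 = y.1 → x.2 = y.2) (hs : x.1 < r ∨ y.1 < r) :
    (sgn (outer r L w x.1) x.2 * sgn (outer r L w y.1) y.2).toWord ≠ [] ∧
    (sgn (outer r L w x.1) x.2 * sgn (outer r L w y.1) y.2).toWord.head? =
      (sgn (outer r L w x.1) x.2).toWord.head? ∧
    (sgn (outer r L w x.1) x.2 * sgn (outer r L w y.1) y.2).toWord.getLast? =
      (sgn (outer r L w y.1) y.2).toWord.getLast? := by
  obtain ⟨i, e⟩ := x
  obtain ⟨j, d⟩ := y
  simp only at *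
  by_cases hi : i < r <;> by_cases hj : j < r
  · simp only [outer, hi, hj, dite_true]
    apply ends_mul_eqlen
    · rw [length_sgn, length_sgn, hlen, hlen]
    · rw [inv_sgn]
      by_cases hij : i = j
      · subst hij
        obtain rfl := hxy rfl
        have := ne_inv_self _ (hc ⟨i, hi⟩)
        cases e
        · simpa [sgn] using this.symm
        · simpa [sgn] using this
      · obtain ⟨h1, h2⟩ := hne ⟨j, hj⟩ ⟨i, hi⟩ (by simpa using Ne.symm hij)
        cases e <;> cases d <;> simp only [sgn, cond_true, cond_false, Bool.not_true, Bool.not_false]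
        · rwa [Ne, inv_eq_iff_eq_inv]
        · exact h1
        · exact fun h => h1 (inv_injective h)
        · exact h2
  · simp only [outer, hi, hj, dite_true, dite_false]
    exact ends_mul_pow _ _ _ (by rw [length_sgn, hlen]; omega) (exists_c_sgn _ _ (hc _))
  · simp only [outer, hi, hj, dite_true, dite_false]
    exact ends_pow_mul _ _ _ (by rw [length_sgn, hlen]; omega) (exists_c_sgn _ _ (hc _))
  · omega

theorem QP_main
    (r L : ℕ) (w : Fin r → FreeGroup Bool)
    (hlen : ∀ i, (w i).norm = r)
    (hne : ∀ i j : Fin r, i ≠ j → w i ≠ w j ∧ w i ≠ (w j)⁻¹)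
    (hc : ∀ i, ∃ p ∈ (w i).toWord, p.1 = true)
    (hhead : ∀ i, (w i).toWord.head? ≠ some (false, false))
    (hlast : ∀ i, (w i).toWord.getLast? ≠ some (false, false))
    (x y : ℕ × Bool) (hxy : x.1 = y.1 → x.2 = y.2) :
    BEnds (QQ r L w x * PP r L w y) ∧
    (x.1 < r → y.1 < r → 2 * L ≤ (QQ r L w x * PP r L w y).norm) := by
  by_cases hs : x.1 < r ∨ y.1 < r
  · obtain ⟨a, b, c⟩ := outer_mul r L w hlen hne hc x y hxy hs
    have hx := outer_ends r L w hhead hlast x.1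
    have hy := outer_ends r L w hhead hlast y.1
    have key : QQ r L w x * PP r L w y = sgn (of false ^ expo r L x.1) x.2 *
        (sgn (outer r L w x.1) x.2 * sgn (outer r L w y.1) y.2) *
        sgn (of false ^ expo r L y.1) y.2 := by
      unfold QQ PP; group
    obtain ⟨h1, h2⟩ := sandwich_bEnds _ x.2 y.2 (expo r L x.1) (expo r L y.1) a
      (expo_pos _ _ _) (expo_pos _ _ _)
      (by rw [b]; exact sgn_head _ _ hx.1 hx.2) (by rw [c]; exact sgn_last _ _ hy.1 hy.2)
    rw [key]
    refine ⟨h1, fun h3 h4 => le_trans ?_ h2⟩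
    unfold expo
    simp only [h3, h4, if_true]
    omega
  · push Not at hs
    refine ⟨?_, fun h => absurd h (by omega)⟩
    have k1 : QQ r L w x = sgn (of false ^ (L + r + x.1 + 1)) x.2 := by
      apply toWord_injective
      rw [QQ_word r L w hhead hlast, outer, dif_neg (by omega), toWord_sgn_pow, toWord_sgn_pow,
        ← List.replicate_add, expo, if_neg (by omega), add_comm]
    have k2 : PP r L w y = sgn (of false ^ (L + r + y.1 + 1)) y.2 := by
      apply toWord_injective
      rw [PP_word r L w hhead hlast, outer, dif_neg (by omega), toWord_sgn_pow, toWord_sgn_pow,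
        ← List.replicate_add, expo, if_neg (by omega)]
    rw [k1, k2]
    exact bEnds_large _ _ _ _ (by omega) (fun h => hxy (by omega))

theorem final
    (r L : ℕ) (w : Fin r → FreeGroup Bool)
    (hlen : ∀ i, (w i).norm = r)
    (hne : ∀ i j : Fin r, i ≠ j → w i ≠ w j ∧ w i ≠ (w j)⁻¹)
    (hc : ∀ i, ∃ p ∈ (w i).toWord, p.1 = true)
    (hhead : ∀ i, (w i).toWord.head? ≠ some (false, false))
    (hlast : ∀ i, (w i).toWord.getLast? ≠ some (false, false))
    (l : List (ℕ × Bool)) (hl : IsReduced l) :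
    (l ≠ [] → (l.map fun x => PP r L w x * sgn (of true) x.2 * QQ r L w x).prod ≠ 1) ∧
      ((∀ y ∈ l, y.1 < r) → 2 * L * l.length ≤
        (l.map fun x => PP r L w x * sgn (of true) x.2 * QQ r L w x).prod.norm) := by
  have hpos := expo_pos r L
  apply chain_final (PP r L w) (QQ r L w) L (fun x => x.1 < r) _ _ _ _ _ _ l hl
  · intro x
    refine ⟨x.2, ?_⟩
    rw [PP_word r L w hhead hlast, List.getLast?_append_of_ne_nil _ (by simp [(hpos x.1).ne'])]
    simp [List.getLast?_replicate, (hpos x.1).ne']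
  · intro x
    refine ⟨x.2, ?_⟩
    rw [QQ_word r L w hhead hlast, List.head?_append_of_ne_nil _ (by simp [(hpos x.1).ne'])]
    simp [List.head?_replicate, (hpos x.1).ne']
  · intro x hx
    unfold FreeGroup.norm
    rw [PP_word r L w hhead hlast, List.length_append, List.length_replicate, expo, if_pos hx]
    omega
  · intro x hx
    unfold FreeGroup.norm
    rw [QQ_word r L w hhead hlast, List.length_append, List.length_replicate, expo, if_pos hx]
    omega
  · exact fun x y h => (QP_main r L w hlen hne hc hhead hlast x y h).1
  · exact fun x y h => (QP_main r L w hlen hne hc hhead hlast x y h).2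

theorem upper
    (r L : ℕ) (w : Fin r → FreeGroup Bool)
    (hlen : ∀ i, (w i).norm = r)
    (hhead : ∀ i, (w i).toWord.head? ≠ some (false, false))
    (hlast : ∀ i, (w i).toWord.getLast? ≠ some (false, false))
    (l : List (ℕ × Bool)) (hS : ∀ y ∈ l, y.1 < r) :
    (l.map fun x => PP r L w x * sgn (of true) x.2 * QQ r L w x).prod.norm ≤
      (4 * r + 2 * L + 1) * l.length := by
  induction l with
  | nil => simp
  | cons x l ih =>
    have h1 := ih (fun y hy => hS y (by simp [hy]))
    have hx := hS x (by simp)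
    have hP : (PP r L w x).norm = r + (L + x.1 + 1) := by
      unfold FreeGroup.norm
      rw [PP_word r L w hhead hlast, List.length_append, List.length_replicate, expo, if_pos hx,
        outer, dif_pos hx, length_sgn, hlen]
    have hQ : (QQ r L w x).norm = r + (L + x.1 + 1) := by
      unfold FreeGroup.norm
      rw [QQ_word r L w hhead hlast, List.length_append, List.length_replicate, expo, if_pos hx,
        outer, dif_pos hx, length_sgn, hlen, add_comm]
    have hC : (sgn (of true : FreeGroup Bool) x.2).norm = 1 := by
      unfold FreeGroup.norm
      rw [toWord_sgn_of]; rfl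
    rw [List.map_cons, List.prod_cons, List.length_cons]
    have a1 := norm_mul_le (PP r L w x * sgn (of true) x.2 * QQ r L w x)
      (l.map fun x => PP r L w x * sgn (of true) x.2 * QQ r L w x).prod
    have a2 := norm_mul_le (PP r L w x * sgn (of true) x.2) (QQ r L w x)
    have a3 := norm_mul_le (PP r L w x) (sgn (of true) x.2)
    rw [mul_add, mul_one]
    omega

theorem closure_letters (r : ℕ) (v : FreeGroup ℕ)
    (hv : v ∈ Subgroup.closure (Set.range fun i : Fin r => FreeGroup.of (i : ℕ))) :
    ∀ y ∈ v.toWord, y.1 < r := by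
  induction hv using Subgroup.closure_induction with
  | mem x hx =>
    obtain ⟨i, rfl⟩ := hx
    simp
  | one => simp
  | mul x y _ _ hx hy =>
    intro z hz
    have := (toWord_mul_sublist x y).subset hz
    rw [List.mem_append] at this
    exact this.elim (hx z) (hy z)
  | inv x _ hx =>
    intro z hz
    rw [toWord_inv] at hz
    simp only [invRev, List.mem_reverse, List.mem_map] at hz
    obtain ⟨p, hp, rfl⟩ := hz
    exact hx p hp

end PsiAux

theorem psi_injective_and_quasiIsometric
    (r L : ℕ) (w : Fin r → FreeGroup Bool)
    (hlen : ∀ i, (w i).norm = r)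
    (hne : ∀ i j : Fin r, i ≠ j → w i ≠ w j ∧ w i ≠ (w j)⁻¹)
    (hc : ∀ i, ∃ p ∈ (w i).toWord, p.1 = true)
    (hhead : ∀ i, (w i).toWord.head? ≠ some (false, false))
    (hlast : ∀ i, (w i).toWord.getLast? ≠ some (false, false)) :
    Function.Injective (psiMap r L w) ∧
    ∀ v : FreeGroup ℕ,
      v ∈ Subgroup.closure (Set.range fun i : Fin r => FreeGroup.of (i : ℕ)) →
        2 * L * v.norm ≤ ((psiMap r L w) v).norm ∧
        ((psiMap r L w) v).norm ≤ (4 * r + 2 * L + 1) * v.norm := by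
  refine ⟨?_, fun v hv => ?_⟩
  · rw [injective_iff_map_eq_one]
    intro v hv
    rw [PsiAux.psiMap_eq] at hv
    by_contra hne1
    exact (PsiAux.final r L w hlen hne hc hhead hlast v.toWord FreeGroup.isReduced_toWord).1
      (fun h => hne1 (FreeGroup.toWord_eq_nil_iff.1 h)) hv
  · rw [PsiAux.psiMap_eq]
    have hS := PsiAux.closure_letters r v hv
    exact ⟨(PsiAux.final r L w hlen hne hc hhead hlast v.toWord FreeGroup.isReduced_toWord).2 hS,
      PsiAux.upper r L w hlen hhead hlast v.toWord hS⟩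
end

section
/- Let k, r ≥ 1, let w₁, …, w_k be elements of the free group F_r of rank r such that every generator of F_r occurs in the reduced word of some w_i, and set D = max_i ‖w_i‖ (so that r ≤ kD). Then there exists an injective group homomorphism ψ : F_r → F₂ into the free group of rank 2 such that: (1) for every v ∈ F_r, 2kD · ‖v‖ ≤ ‖ψ(v)‖ ≤ (6kD + 1) · ‖v‖ (a quasi-isometric embedding whose constant does not exceed 6kD + 1); and (2) 2kD² ≤ max_i ‖ψ(w_i)‖ ≤ 7kD². -/
open FreeGroup in
theorem qi_mk_replicate {α : Type*} (n : ℕ) (x : α × Bool) :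
    (mk (List.replicate n x) : FreeGroup α) = (mk [x]) ^ n := by
  induction n with
  | zero => simp [one_eq_mk]
  | succ n ih => rw [List.replicate_succ, pow_succ', ← ih, mul_mk]; rfl

/-- The conjugate `a ^ i * b ^ M * a ^ (-i)`. -/
def qiWord (M i : ℕ) : FreeGroup Bool :=
  FreeGroup.of false ^ i * FreeGroup.of true ^ M * (FreeGroup.of false ^ i)⁻¹

/-- The homomorphism sending the `i`-th generator to `qiWord M i`. -/
def qiHom (M r : ℕ) : FreeGroup (Fin r) →* FreeGroup Bool :=
  FreeGroup.lift fun g => qiWord M g.val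

open FreeGroup in
theorem qi_letter (M r : ℕ) (g : Fin r) (e : Bool) :
    qiHom M r (mk [(g, e)]) =
      of false ^ g.val * mk (List.replicate M (true, e)) * (of false ^ g.val)⁻¹ := by
  rw [qi_mk_replicate]
  cases e
  · have h : (mk [(g, false)] : FreeGroup (Fin r)) = (of g)⁻¹ := by simp [of, inv_mk, invRev]
    have h2 : (mk [(true, false)] : FreeGroup Bool) = (of true)⁻¹ := by simp [of, inv_mk, invRev]
    rw [h, h2, _root_.map_inv, qiHom, lift_apply_of, qiWord]
    group
  · change qiHom M r (of g) = _ * (of true) ^ M * _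
    rw [qiHom, lift_apply_of, qiWord]

open FreeGroup in
theorem qi_rep_append {x y : Bool × Bool} {L : List (Bool × Bool)} (n m : ℕ) (hm : m ≠ 0)
    (hxy : x.1 = y.1 → x.2 = y.2) (h : IsReduced (List.replicate m y ++ L)) :
    IsReduced (List.replicate n x ++ (List.replicate m y ++ L)) := by
  obtain ⟨m, rfl⟩ := Nat.exists_eq_succ_of_ne_zero hm
  rw [List.replicate_succ, List.cons_append] at *
  induction n with
  | zero => simpa using h
  | succ n ih =>
    rw [List.replicate_succ, List.cons_append]
    cases n with
    | zero =>
      simp only [List.replicate_zero, List.nil_append] at *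
      exact List.IsChain.cons_cons hxy ih
    | succ n =>
      rw [List.replicate_succ, List.cons_append] at *
      exact List.IsChain.cons_cons (fun _ => rfl) ih

open FreeGroup in
theorem qi_structure (M r : ℕ) (hM : M ≠ 0) (L : List (Fin r × Bool)) :
    ∀ (g : Fin r) (e : Bool), IsReduced ((g, e) :: L) →
      ∃ R : List (Bool × Bool), IsReduced (List.replicate M (true, e) ++ R) ∧
        qiHom M r (mk ((g, e) :: L)) =
          of false ^ g.val * mk (List.replicate M (true, e) ++ R) ∧
        M * (L.length + 1) ≤ M + R.length := by
  induction L with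
  | nil =>
    intro g e _
    refine ⟨List.replicate g.val (false, false), ?_, ?_, by simp⟩
    · by_cases hg : g.val = 0
      · have := qi_rep_append (x := (true, e)) (y := (true, e)) (L := []) 0 M hM (by simp)
        rw [hg]
        simp only [List.replicate_zero, List.append_nil, List.nil_append] at *
        exact this (List.isChain_replicate_of_rel _ (fun _ => rfl))
      · have := qi_rep_append (x := (true, e)) (y := (false, false)) (L := []) M g.val hg (by simp)
        simp only [List.append_nil] at this
        exact this (List.isChain_replicate_of_rel _ (fun _ => rfl))
    · rw [qi_letter, ← mul_mk, qi_mk_replicate g.val]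
      have h2 : (mk [(false, false)] : FreeGroup Bool) = (of false)⁻¹ := by
        simp [of, inv_mk, invRev]
      rw [h2]; group
  | cons p L ih =>
    obtain ⟨g', e'⟩ := p
    intro g e h
    obtain ⟨hh, ht⟩ := List.isChain_cons_cons.1 h
    obtain ⟨R, hR, hψ, hl⟩ := ih g' e' ht
    have h0 : (mk ((g, e) :: (g', e') :: L) : FreeGroup (Fin r)) =
        mk [(g, e)] * mk ((g', e') :: L) := by rw [mul_mk]; rfl
    rw [h0, _root_.map_mul, hψ, qi_letter]
    rcases lt_trichotomy g.val g'.val with hlt | heq | hlt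
    · refine ⟨List.replicate (g'.val - g.val) (false, true) ++
        (List.replicate M (true, e') ++ R), ?_, ?_, ?_⟩
      · exact qi_rep_append _ _ (by omega) (by simp) (qi_rep_append _ _ hM (by simp) hR)
      · rw [← mul_mk (L₁ := List.replicate M (true, e)), ← mul_mk (L₁ := List.replicate _ (false, _)),
          qi_mk_replicate (g'.val - g.val)]
        change _ = _ * (_ * (of false ^ _ * _))
        obtain ⟨d, hd⟩ := Nat.exists_eq_add_of_lt hlt
        rw [hd, show g.val + d + 1 - g.val = d + 1 by omega, show g.val + d + 1 = g.val + (d + 1)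
          by omega, pow_add]
        group
      · simp only [List.length_append, List.length_replicate, List.length_cons]
        nlinarith
    · have hg : g = g' := Fin.ext heq
      have he : e = e' := hh hg
      subst hg he
      refine ⟨List.replicate M (true, e) ++ R, ?_, ?_, ?_⟩
      · exact qi_rep_append _ _ hM (by simp) hR
      · rw [← mul_mk (L₁ := List.replicate M (true, e)) (L₂ := _ ++ _)]
        group
      · simp only [List.length_append, List.length_replicate, List.length_cons]
        nlinarith
    · refine ⟨List.replicate (g.val - g'.val) (false, false) ++
        (List.replicate M (true, e') ++ R), ?_, ?_, ?_⟩
      · exact qi_rep_append _ _ (by omega) (by simp) (qi_rep_append _ _ hM (by simp) hR)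
      · rw [← mul_mk (L₁ := List.replicate M (true, e)), ← mul_mk (L₁ := List.replicate _ (false, _)),
          qi_mk_replicate (g.val - g'.val)]
        have h2 : (mk [(false, false)] : FreeGroup Bool) = (of false)⁻¹ := by
          simp [of, inv_mk, invRev]
        rw [h2]
        obtain ⟨d, hd⟩ := Nat.exists_eq_add_of_lt hlt
        rw [hd, show g'.val + d + 1 - g'.val = d + 1 by omega,
          show g'.val + d + 1 = g'.val + (d + 1) by omega, pow_add]
        generalize (mk (List.replicate M (true, e')  ++ R) : FreeGroup Bool) = X
        group
      · simp only [List.length_append, List.length_replicate, List.length_cons]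
        nlinarith

open FreeGroup in
theorem qi_lower (M r : ℕ) (hM : M ≠ 0) (v : FreeGroup (Fin r)) :
    M * v.norm ≤ (qiHom M r v).norm := by
  have hred : IsReduced v.toWord := isReduced_toWord
  have hv : mk v.toWord = v := mk_toWord
  unfold FreeGroup.norm
  generalize v.toWord = W at *
  subst hv
  cases W with
  | nil => simp
  | cons p L =>
    obtain ⟨g, e⟩ := p
    obtain ⟨R, hR, hψ, hl⟩ := qi_structure M r hM L g e hred
    have h1 : (of false : FreeGroup Bool) ^ g.val = mk (List.replicate g.val (false, true)) :=
      (qi_mk_replicate _ _).symm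
    rw [hψ, h1, mul_mk, toWord_mk,
      (qi_rep_append (x := (false, true)) g.val M hM (by simp) hR).reduce_eq]
    simp only [List.length_append, List.length_replicate, List.length_cons]
    omega

open FreeGroup in
theorem qi_upper (M r : ℕ) (v : FreeGroup (Fin r)) :
    (qiHom M r v).norm ≤ (M + 2 * r) * v.norm := by
  have hv : mk v.toWord = v := mk_toWord
  rw [FreeGroup.norm.eq_def v]
  generalize v.toWord = W at *
  subst hv
  induction W with
  | nil => simp [← one_eq_mk]
  | cons p L ih =>
    obtain ⟨g, e⟩ := p
    have h0 : (mk ((g, e) :: L) : FreeGroup (Fin r)) = mk [(g, e)] * mk L := by rw [mul_mk]; rfl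
    rw [h0, _root_.map_mul]
    have h1 : (qiHom M r (mk [(g, e)])).norm ≤ M + 2 * r := by
      rw [qi_letter]
      refine (FreeGroup.norm_mul_le _ _).trans ?_
      have h2 := FreeGroup.norm_mul_le (of false ^ g.val) (mk (List.replicate M (true, e)))
      have h3 : (mk (List.replicate M (true, e))).norm ≤ _ := norm_mk_le
      rw [List.length_replicate] at h3
      rw [norm_inv_eq]
      rw [norm_of_pow] at *
      have := g.isLt
      omega
    have := FreeGroup.norm_mul_le (qiHom M r (mk [(g, e)])) (qiHom M r (mk L))
    rw [List.length_cons, mul_add]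
    omega

theorem qi_rank (k r : ℕ) (w : Fin k → FreeGroup (Fin r))
    (hocc : ∀ g : Fin r, ∃ i : Fin k, ∃ p ∈ (w i).toWord, p.1 = g)
    (D : ℕ) (hD : ∀ i, (w i).norm ≤ D) : r ≤ k * D := by
  have h : (Finset.univ : Finset (Fin r)) ⊆
      Finset.univ.biUnion fun i : Fin k => ((w i).toWord.map Prod.fst).toFinset := by
    intro g _
    obtain ⟨i, p, hp, hg⟩ := hocc g
    simp only [Finset.mem_biUnion, Finset.mem_univ, true_and, List.mem_toFinset, List.mem_map]
    exact ⟨i, p, hp, hg⟩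
  have h1 := Finset.card_le_card h
  have h2 := Finset.card_biUnion_le_card_mul (Finset.univ : Finset (Fin k))
    (fun i : Fin k => ((w i).toWord.map Prod.fst).toFinset) D (fun i _ =>
      (List.toFinset_card_le _).trans (by rw [List.length_map]; exact hD i))
  simp only [Finset.card_univ, Fintype.card_fin] at h1 h2
  exact h1.trans h2

theorem free_group_qi_embedding_controlled_displacement
    (k r : ℕ) (hk : 1 ≤ k) (hr : 1 ≤ r)
    (w : Fin k → FreeGroup (Fin r))
    (hocc : ∀ g : Fin r, ∃ i : Fin k, ∃ p ∈ (w i).toWord, p.1 = g)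
    (D : ℕ) (hD : D = Finset.univ.sup fun i : Fin k => (w i).norm) :
    ∃ ψ : FreeGroup (Fin r) →* FreeGroup Bool,
      Function.Injective ψ ∧
      (∀ v : FreeGroup (Fin r),
        2 * k * D * v.norm ≤ (ψ v).norm ∧ (ψ v).norm ≤ (6 * k * D + 1) * v.norm) ∧
      2 * k * D ^ 2 ≤ (Finset.univ.sup fun i : Fin k => (ψ (w i)).norm) ∧
      (Finset.univ.sup fun i : Fin k => (ψ (w i)).norm) ≤ 7 * k * D ^ 2 := by
  have hle : ∀ i, (w i).norm ≤ D := fun i => by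
    rw [hD]; exact Finset.le_sup (f := fun i => (w i).norm) (Finset.mem_univ i)
  have hrk := qi_rank k r w hocc D hle
  have hM : 2 * k * D ≠ 0 := by
    rw [mul_assoc]; omega
  have hlow := qi_lower (2 * k * D) r hM
  have hupp : ∀ v : FreeGroup (Fin r),
      (qiHom (2 * k * D) r v).norm ≤ 4 * k * D * v.norm := fun v =>
    (qi_upper (2 * k * D) r v).trans (Nat.mul_le_mul_right _ (by nlinarith))
  refine ⟨qiHom (2 * k * D) r, ?_, fun v => ⟨hlow v, (hupp v).trans ?_⟩, ?_, ?_⟩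
  · rw [injective_iff_map_eq_one]
    intro v hv
    have := hlow v
    rw [hv, FreeGroup.norm_one] at this
    have h0 : 2 * k * D * v.norm = 0 := Nat.le_zero.1 this
    exact FreeGroup.norm_eq_zero.1 ((mul_eq_zero.1 h0).resolve_left hM)
  · exact Nat.mul_le_mul_right _ (by nlinarith)
  · obtain ⟨i, _, hi⟩ := Finset.exists_mem_eq_sup (Finset.univ : Finset (Fin k))
      ⟨⟨0, hk⟩, Finset.mem_univ _⟩ (fun i => (w i).norm)
    have h1 := hlow (w i)
    have h2 : (w i).norm = D := by rw [hD, hi]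
    rw [h2] at h1
    calc 2 * k * D ^ 2 = 2 * k * D * D := by ring
      _ ≤ _ := h1
      _ ≤ _ := Finset.le_sup (f := fun i => (qiHom (2 * k * D) r (w i)).norm) (Finset.mem_univ i)
  · refine Finset.sup_le fun i _ => (hupp (w i)).trans ?_
    calc 4 * k * D * (w i).norm ≤ 4 * k * D * D := Nat.mul_le_mul_left _ (hle i)
      _ = 4 * (k * D ^ 2) := by ring
      _ ≤ 7 * (k * D ^ 2) := Nat.mul_le_mul_right _ (by norm_num)
      _ = _ := by ring
end

section
/- Let Γ be a simple graph on a finite vertex set V whose edge set is partitioned into two disjoint sets E(Γ) = E_d ⊔ E_c, satisfying: (i) whenever {x,y} ∈ E_c and {y,z} ∈ E_c with x ≠ z, also {x,z} ∈ E_c; and (ii) whenever {x,y} ∈ E_c, then for every vertex z ∉ {x,y} one has {x,z} ∈ E_d if and only if {y,z} ∈ E_d. For a set F of edges, call a subset S ⊆ V join-decomposable over F if S can be partitioned into two nonempty subsets S₁ and S₂ such that {s₁, s₂} ∈ F for every s₁ ∈ S₁ and s₂ ∈ S₂. Then: if S ⊆ V is join-decomposable over E(Γ) but not join-decomposable over E_d,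 every pair of distinct vertices of S is joined by an edge of E_c (i.e., S is a clique in the graph with edge set E_c). (This is the graph-theoretic content of the statement that an E_d-directly indecomposable canonical parabolic subgroup K^⊥ of the partially commutative group 𝔾(Γ) is either directly indecomposable or E_c-abelian.) -/
/-- A set `S` of vertices is join-decomposable over (the edge set of) a graph
`Gr` if it can be partitioned into two nonempty subsets `S₁`, `S₂` such that
every vertex of `S₁` is joined to every vertex of `S₂` by an edge of `Gr`. -/
def JoinDecomp {V : Type*} (Gr : SimpleGraph V) (S : Set V) : Prop :=
  ∃ S₁ S₂ : Set V, S₁.Nonempty ∧ S₂.Nonempty ∧ Disjoint S₁ S₂ ∧ S₁ ∪ S₂ = S ∧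
    ∀ s₁ ∈ S₁, ∀ s₂ ∈ S₂, Gr.Adj s₁ s₂

theorem Ed_indecomposable_is_indecomposable_or_Ec_clique
    {V : Type} [Fintype V] (Γ Gd Gc : SimpleGraph V)
    (hunion : Γ = Gd ⊔ Gc)
    (hdisj : ∀ x y : V, ¬ (Gd.Adj x y ∧ Gc.Adj x y))
    (hEc_trans : ∀ x y z : V, Gc.Adj x y → Gc.Adj y z → x ≠ z → Gc.Adj x z)
    (hEc_Ed : ∀ x y z : V, Gc.Adj x y → z ≠ x → z ≠ y → (Gd.Adj x z ↔ Gd.Adj y z))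
    (S : Set V)
    (hdec : JoinDecomp Γ S) (hnotdec : ¬ JoinDecomp Gd S) :
    ∀ x ∈ S, ∀ y ∈ S, x ≠ y → Gc.Adj x y := by
  subst hunion
  obtain ⟨S₁, S₂, h1, h2, hd, hS, hJ⟩ := hdec
  have hex : ∃ a ∈ S₁, ∃ b ∈ S₂, Gc.Adj a b := by
    by_contra hno
    push Not at hno
    refine hnotdec ⟨S₁, S₂, h1, h2, hd, hS, fun a ha b hb => ?_⟩
    rcases hJ a ha b hb with h | h
    · exact h
    · exact absurd h (hno a ha b hb)
  obtain ⟨a, ha, b, hb, hab⟩ := hex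
  have haS : a ∈ S := hS ▸ Or.inl ha
  -- every vertex of S outside the E_c-class of a is E_d-adjacent to a
  have key : ∀ z ∈ S, z ≠ a → ¬ Gc.Adj a z → Gd.Adj a z := by
    intro z hz hza hn
    rw [← hS] at hz
    rcases hz with hz | hz
    · have hzb : z ≠ b := fun h => hn (h ▸ hab)
      have hd' : Gd.Adj z b := by
        rcases hJ z hz b hb with h | h
        · exact h
        · exact absurd (hEc_trans a b z hab h.symm hza.symm) hn
      exact (hEc_Ed a b z hab hza hzb).2 hd'.symm
    · rcases hJ a ha z hz with h | h
      · exact h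
      · exact absurd h hn
  have hall : ∀ z ∈ S, z ≠ a → Gc.Adj a z := by
    by_contra hno
    push Not at hno
    obtain ⟨w, hw, hwa, hwn⟩ := hno
    refine hnotdec ⟨{c | c ∈ S ∧ (c = a ∨ Gc.Adj a c)}, {c | c ∈ S ∧ ¬ (c = a ∨ Gc.Adj a c)},
      ⟨a, haS, Or.inl rfl⟩, ⟨w, hw, by tauto⟩, ?_, ?_, ?_⟩
    · rw [Set.disjoint_left]
      rintro x ⟨_, hx⟩ ⟨_, hx'⟩
      exact hx' hx
    · ext x
      simp only [Set.mem_union, Set.mem_setOf_eq]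
      tauto
    · rintro c ⟨_, hc⟩ z ⟨hz, hz'⟩
      have hza : z ≠ a := fun h => hz' (Or.inl h)
      have hzn : ¬ Gc.Adj a z := fun h => hz' (Or.inr h)
      have hk := key z hz hza hzn
      rcases hc with rfl | hc
      · exact hk
      · exact (hEc_Ed a c z hc hza (fun h => hzn (h ▸ hc))).1 hk
  intro x hx y hy hxy
  by_cases hxa : x = a
  · subst hxa
    exact hall y hy hxy.symm
  · by_cases hya : y = a
    · subst hya
      exact (hall x hx hxa).symm
    · exact hEc_trans x a y (hall x hx hxa).symm (hall y hy hya) hxy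
end
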